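/- Let q be a divisor of e with e/q and e/p coprime, and suppose the irreducible character χ^{α,φ} of W is σ^q-stable, with fixed extension χ̃^{α,φ} to ⟨σ^q⟩⋉W. Then for every w ∈ σ^q W and every 0 ≤ i < c_{α,p}, the extended characters satisfy χ̃^{θ^i(α),φ}(w) = ζ^{qid}·χ̃^{α,φ}(w). -/

import Mathlib

/-!
Common framework for formalizing T. Shoji, "Green functions associated to
complex reflection groups, II" (arXiv:math/0105053).

We model:
* `e`-partitions of `n` as functions `ZMod e → Multiset ℕ`;
* the complex reflection group `W̃ = G(e,1,n)` as the semidirect product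
  `(Fin n → Multiplicative (ZMod e)) ⋊ Equiv.Perm (Fin n)`, and
  `W = G(e,p,n)` as the kernel of the mod-`p` sum character;
* the tensor space `V^{⊗n}` concretely via matrices indexed by
  `Fin n → (Σ k : ZMod e, Fin (m k))`;
* symmetric functions in the (finitely many, `m k ≥ n`) variables
  `x_i^{(k)}` in evaluated form, i.e. as functions of an assignment
  `xv : (Σ k : ZMod e, Fin (m k)) → ℂ`.
-/

open scoped BigOperators

attribute [local instance] Classical.propDecidable

namespace GreenII

/-! ## Combinatorics of e-partitions -/

/-- An `e`-partition of `n`: a tuple of partitions (multisets of positive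
integers) indexed by `ZMod e`, with total size `n`. -/
def IsEPartition (e : ℕ) [NeZero e] (n : ℕ) (α : ZMod e → Multiset ℕ) : Prop :=
  (∀ k, ∀ x ∈ α k, 0 < x) ∧ (∑ k : ZMod e, (α k).sum) = n

/-- The shift operator `θ = θ_p`, `θ(α)^{(k)} = α^{(k-d)}`. -/
def theta (e : ℕ) [NeZero e] (d : ℕ) (α : ZMod e → Multiset ℕ) : ZMod e → Multiset ℕ :=
  fun k => α (k - (d : ZMod e))

/-- `c_{α,p}`: the size of the `θ`-orbit of `α`. -/
noncomputable def csize (e : ℕ) [NeZero e] (d : ℕ) (α : ZMod e → Multiset ℕ) : ℕ :=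
  Function.minimalPeriod (theta e d) α

/-- `Δ(α) = ∑_k k · l(α^{(k)})`. -/
def Delta (e : ℕ) [NeZero e] (α : ZMod e → Multiset ℕ) : ℕ :=
  ∑ k : ZMod e, k.val * (α k).card

/-- `l(α) = ∑_k l(α^{(k)})`, the total number of parts. -/
def lenE (e : ℕ) [NeZero e] (α : ZMod e → Multiset ℕ) : ℕ :=
  ∑ k : ZMod e, (α k).card

/-- `α` and `β` lie in the same `θ`-orbit. -/
def SameOrbit (e : ℕ) [NeZero e] (d : ℕ) (α β : ZMod e → Multiset ℕ) : Prop :=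
  ∃ i, (theta e d)^[i] α = β

/-! ## The groups `W̃ = G(e,1,n)` and `W = G(e,p,n)` -/

/-- The "diagonal" part of `G(e,1,n)`. -/
abbrev NC (e n : ℕ) := Fin n → Multiplicative (ZMod e)

/-- The permutation action of `𝔖_n` on the diagonal part. -/
def permAut (e n : ℕ) (x : Equiv.Perm (Fin n)) : NC e n ≃* NC e n where
  toFun f := f ∘ ⇑x.symm
  invFun f := f ∘ ⇑x
  left_inv f := by funext i; simp
  right_inv f := by funext i; simp
  map_mul' f g := rfl

def permHom (e n : ℕ) : Equiv.Perm (Fin n) →* MulAut (NC e n) where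
  toFun x := permAut e n x
  map_one' := rfl
  map_mul' x y := rfl

/-- `W̃ = G(e,1,n) ≅ (ℤ/eℤ)^n ⋊ 𝔖_n`, with `w = x(a_1,…,a_n)` recorded as
`⟨(a_i), x⟩`. -/
abbrev Wt (e n : ℕ) := NC e n ⋊[permHom e n] Equiv.Perm (Fin n)

noncomputable instance WtFintype (e n : ℕ) [NeZero e] : Fintype (Wt e n) :=
  Fintype.ofEquiv (NC e n × Equiv.Perm (Fin n))
    { toFun := fun x => ⟨x.1, x.2⟩
      invFun := fun x => (x.left, x.right)
      left_inv := fun _ => rfl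
      right_inv := fun _ => rfl }

/-- The character `w ↦ ∑ a_i mod p` of `W̃`. -/
noncomputable def wsumHom (e p n : ℕ) (hp : p ∣ e) : Wt e n →* Multiplicative (ZMod p) where
  toFun w := Multiplicative.ofAdd (∑ i, ZMod.castHom hp (ZMod p) (w.left i).toAdd)
  map_one' := by simp
  map_mul' w w' := by
    have h : ∀ i, ((w * w').left i).toAdd
        = (w.left i).toAdd + (w'.left (w.right.symm i)).toAdd := fun _ => rfl
    simp only [h, map_add, Finset.sum_add_distrib, ofAdd_add]
    congr 2
    exact Equiv.sum_comp w.right.symm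
      (fun i => ZMod.castHom hp (ZMod p) ((w'.left i).toAdd))

/-- `W = G(e,p,n)`: the subgroup of `W̃` on which `∑ a_i ≡ 0 (mod p)`. -/
noncomputable def Wgrp (e p n : ℕ) (hp : p ∣ e) : Subgroup (Wt e n) :=
  (wsumHom e p n hp).ker

/-- `σ = t_1 ∈ W̃`. -/
def sigmaElt (e n : ℕ) [NeZero n] : Wt e n :=
  SemidirectProduct.inl (fun i => Multiplicative.ofAdd (if i = (0 : Fin n) then (1 : ZMod e) else 0))

/-- membership in the coset `σ^q W`. -/
def inCoset (e p n : ℕ) [NeZero n] (hp : p ∣ e) (q : ℕ) (w : Wt e n) : Prop :=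
  ∃ u ∈ Wgrp e p n hp, w = (sigmaElt e n) ^ q * u

/-- conjugacy under `W`. -/
def IsConjW (e p n : ℕ) (hp : p ∣ e) (w w' : Wt e n) : Prop :=
  ∃ u ∈ Wgrp e p n hp, u * w * u⁻¹ = w'

/-- The `e`-partition recording the conjugacy class of `w ∈ W̃`:
a `k`-cycle of length `l` (a cycle of the underlying permutation whose
accumulated `ZMod e`-color is `k`, fixed points counting as `1`-cycles)
contributes a part `l` to the `k`-th component. -/
noncomputable def classOf (e n : ℕ) [NeZero e] (w : Wt e n) : ZMod e → Multiset ℕ := fun k =>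
  ((w.right.cycleFactorsFinset.val.filter
      (fun c => (∑ i ∈ c.support, (w.left i).toAdd) = k)).map fun c => c.support.card)
    + Multiset.replicate
        ((Finset.univ.filter fun i : Fin n => w.right i = i ∧ (w.left i).toAdd = k).card) 1

/-! ### The standard class representative `w_α(b)` -/

/-- The list of (part, color) pairs of an `e`-partition. -/
noncomputable def partsList (e : ℕ) [NeZero e] (α : ZMod e → Multiset ℕ) : List (ℕ × ZMod e) :=
  (Finset.univ : Finset (ZMod e)).toList.flatMap fun k => (α k).toList.map fun r => (r, k)

/-- the color datum of `w_α(b)`: each cycle carries its color at its first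
point, except the first (exceptional) cycle, which carries `k - b` at its
first point and `b` at its last point. -/
noncomputable def aexc (e : ℕ) [NeZero e] (L : List (ℕ × ZMod e)) (b : ZMod e) :
    (Σ i : Fin L.length, Fin (L.get i).1) → ZMod e := fun x =>
  if (x.1 : ℕ) = 0 then
    (if (x.2 : ℕ) = 0 then (L.get x.1).2 - b else 0)
      + (if (x.2 : ℕ) = (L.get x.1).1 - 1 then b else 0)
  else if (x.2 : ℕ) = 0 then (L.get x.1).2 else 0

/-- The standard representative `w_α(b) ∈ W̃` of the paper, 2.6: a product of
disjoint cycles matching `α`, of the form `t_{i_1}^k z` except for one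
exceptional cycle `t_{i_1}^{k-b} t_{i_m}^{b} z`. -/
noncomputable def wrep (e n : ℕ) [NeZero e] (α : ZMod e → Multiset ℕ) (b : ZMod e) : Wt e n :=
  if hcard : Fintype.card (Σ i : Fin (partsList e α).length, Fin ((partsList e α).get i).1) = n then
    let φ := Fintype.equivFinOfCardEq hcard
    ⟨fun t => Multiplicative.ofAdd (aexc e (partsList e α) b (φ.symm t)),
      φ.symm.trans ((Equiv.sigmaCongrRight fun _ => finRotate _).trans φ)⟩
  else 1

/-! ## The tensor space `V^{⊗n}` -/

/-- Basis index of `V = ⊕_k V_k`, `dim V_k = m k`. -/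
abbrev BIdx (e : ℕ) [NeZero e] (m : ZMod e → ℕ) := Σ k : ZMod e, Fin (m k)

/-- Basis index of `V^{⊗n}`. -/
abbrev TIdx (e n : ℕ) [NeZero e] (m : ZMod e → ℕ) := Fin n → BIdx e m

/-- `ζ` raised to a `ZMod e` exponent. -/
noncomputable def zmpow (e : ℕ) [NeZero e] (ζ : ℂ) (c : ZMod e) : ℂ := ζ ^ c.val

/-- the matrix of `w ∈ W̃` on `V^{⊗n}` (𝔖_n permutes the factors, and
`t_k` multiplies by `ζ^j` if the `k`-th factor lies in `V_j`). -/
noncomputable def rhoMat (e n : ℕ) [NeZero e] (ζ : ℂ) (m : ZMod e → ℕ) (w : Wt e n) :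
    Matrix (TIdx e n m) (TIdx e n m) ℂ := fun b' b =>
  if b' = b ∘ ⇑w.right.symm then ∏ s, ζ ^ (((w.left s).toAdd.val) * (b' s).1.val) else 0

/-- The operator `D` (multiplication by `x_{i_1} ⋯ x_{i_n}`), with the
variables evaluated via `xv`. -/
noncomputable def Dmat (e n : ℕ) [NeZero e] (m : ZMod e → ℕ) (xv : BIdx e m → ℂ) :
    Matrix (TIdx e n m) (TIdx e n m) ℂ :=
  Matrix.diagonal fun b => ∏ s, xv (b s)

/-- `τ` on the basis of `V`: `v_j^{(k)} ↦ v_j^{(k+d)}` (uses `m (k+d) = m k`). -/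
def tauB (e : ℕ) [NeZero e] (d : ℕ) (m : ZMod e → ℕ) (hm : ∀ k, m (k + (d : ZMod e)) = m k) :
    BIdx e m → BIdx e m := fun b => ⟨b.1 + (d : ZMod e), Fin.cast (hm b.1).symm b.2⟩

/-- `g ↦ g^{⊗ n}`: the matrix of `g ∈ End V` acting diagonally on `V^{⊗n}`. -/
noncomputable def tensorPow (e n : ℕ) [NeZero e] (m : ZMod e → ℕ)
    (g : Matrix (BIdx e m) (BIdx e m) ℂ) : Matrix (TIdx e n m) (TIdx e n m) ℂ :=
  Matrix.of fun b' b => ∏ s, g (b' s) (b s)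

/-- the matrix of `τ` on `V`. -/
noncomputable def tauV (e : ℕ) [NeZero e] (d : ℕ) (m : ZMod e → ℕ)
    (hm : ∀ k, m (k + (d : ZMod e)) = m k) : Matrix (BIdx e m) (BIdx e m) ℂ :=
  fun b' b => if b' = tauB e d m hm b then 1 else 0

/-- the matrix of `τ` on `V^{⊗n}`. -/
noncomputable def tauMat (e n : ℕ) [NeZero e] (d : ℕ) (m : ZMod e → ℕ)
    (hm : ∀ k, m (k + (d : ZMod e)) = m k) : Matrix (TIdx e n m) (TIdx e n m) ℂ :=
  tensorPow e n m (tauV e d m hm)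

/-- a member of `G = GL_{m_0} × ⋯ × GL_{m_{e-1}}` (as an endomorphism of V,
invertibility stated separately). -/
def IsBlockDiag (e : ℕ) [NeZero e] (m : ZMod e → ℕ) (g : Matrix (BIdx e m) (BIdx e m) ℂ) : Prop :=
  ∀ b b' : BIdx e m, b.1 ≠ b'.1 → g b b' = 0

/-- a block upper unitriangular matrix (product of root subgroups for the
positive roots of `G`). -/
def IsUpperUni (e : ℕ) [NeZero e] (m : ZMod e → ℕ) (g : Matrix (BIdx e m) (BIdx e m) ℂ) : Prop :=
  (∀ b, g b b = 1) ∧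
    ∀ b b' : BIdx e m, b ≠ b' → ¬(b.1 = b'.1 ∧ b.2.val < b'.2.val) → g b b' = 0

/-! ## Symmetric functions (evaluated form) -/

/-- value of the variable `x_i^{(k)}` under the assignment `xv` (junk `0` out
of range). -/
noncomputable def xval (e : ℕ) [NeZero e] (m : ZMod e → ℕ) (xv : BIdx e m → ℂ)
    (k : ZMod e) (i : ℕ) : ℂ :=
  if h : i < m k then xv ⟨k, ⟨i, h⟩⟩ else 0

/-- `h_j`: the order of the image of `j` in `ℤ/pℤ`. -/
noncomputable def hOrd (p j : ℕ) : ℕ := addOrderOf ((j : ZMod p))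

/-- `j₁ d` where `j₁ = p / h_j`: the number of components of the variable
system `𝒳_j`. -/
noncomputable def Esys (p d j : ℕ) : ℕ := (p / hOrd p j) * d

/-- the variable `X_i^{(k)} = x_i^{(k)} x_i^{(k+jd)} ⋯ x_i^{(k+(h_j-1)jd)}`
of the system `𝒳_j`. -/
noncomputable def Xvar (e : ℕ) [NeZero e] (p d : ℕ) (m : ZMod e → ℕ) (xv : BIdx e m → ℂ)
    (j k i : ℕ) : ℂ :=
  ∏ s ∈ Finset.range (hOrd p j), xval e m xv (((k + s * j * d : ℕ) : ZMod e)) i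

/-- number of variables in the `k`-th component of any of the systems `𝒳_j`. -/
noncomputable def mmX (e : ℕ) [NeZero e] (m : ZMod e → ℕ) : ℕ → ℕ := fun k => m ((k : ℕ) : ZMod e)

/-- The variables of the system `𝒳_j`, as a doubly indexed family. -/
noncomputable def vvX (e : ℕ) [NeZero e] (p d : ℕ) (m : ZMod e → ℕ) (xv : BIdx e m → ℂ)
    (j : ℕ) : ℕ → ℕ → ℂ := fun k i => Xvar e p d m xv j k i

/-- complete homogeneous symmetric polynomial `h_r` in `N` variables. -/
noncomputable def hcomp (N r : ℕ) (v : ℕ → ℂ) : ℂ :=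
  ∑ c ∈ Finset.Nat.antidiagonalTuple N r, ∏ i : Fin N, v i ^ c i

/-- the parts of a partition in decreasing order (`0` beyond the length). -/
noncomputable def lamOf (μ : Multiset ℕ) (i : ℕ) : ℕ := ((μ.sort (· ≤ ·)).reverse).getD i 0

/-- Schur polynomial in `N` variables (Jacobi–Trudi). -/
noncomputable def schurFin (N : ℕ) (μ : Multiset ℕ) (v : ℕ → ℂ) : ℂ :=
  Matrix.det (Matrix.of fun i j : Fin N =>
    if h : (0 : ℤ) ≤ (lamOf μ i + j : ℤ) - i then hcomp N ((lamOf μ i + j : ℤ) - i).toNat v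
    else 0)

/-- monomial symmetric polynomial in `N` variables. -/
noncomputable def monoFin (N : ℕ) (μ : Multiset ℕ) (v : ℕ → ℂ) : ℂ :=
  ∑ c ∈ (Finset.Nat.antidiagonalTuple N μ.sum).filter
      (fun c => ((List.ofFn c : List ℕ) : Multiset ℕ).filter (fun x => 0 < x) = μ),
    ∏ i : Fin N, v i ^ c i

/-! ### generic families for a variable system with `E` components -/

/-- `p_r^{(i)} = ∑_{k<E} u^{ik} p_r(x^{(k)})` (formula (2.2.2)/(2.4.2), with
`u` a primitive `E`-th root of unity), for the system of variables
`vv k i` (`k < E`, `i < mm k`); `p_0^{(i)} = 1`. -/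
noncomputable def pGenSys (u : ℂ) (E : ℕ) (mm : ℕ → ℕ) (vv : ℕ → ℕ → ℂ) (i r : ℕ) : ℂ :=
  if r = 0 then 1 else ∑ k ∈ Finset.range E, u ^ (i * k) * ∑ s ∈ Finset.range (mm k), vv k s ^ r

/-- the power sum `p_γ` of an `E`-tuple of partitions (2.2.1). -/
noncomputable def pAlphaSys (u : ℂ) (E : ℕ) (mm : ℕ → ℕ) (vv : ℕ → ℕ → ℂ)
    (γ : ℕ → Multiset ℕ) : ℂ :=
  ∏ k ∈ Finset.range E, ((γ k).map fun r => pGenSys u E mm vv k r).prod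

/-- the Schur function `s_γ` of an `E`-tuple of partitions. -/
noncomputable def sAlphaSys (E : ℕ) (mm : ℕ → ℕ) (vv : ℕ → ℕ → ℂ) (γ : ℕ → Multiset ℕ) : ℂ :=
  ∏ k ∈ Finset.range E, schurFin (mm k) (γ k) (vv k)

/-- the monomial symmetric function `m_γ` of an `E`-tuple of partitions. -/
noncomputable def mAlphaSys (E : ℕ) (mm : ℕ → ℕ) (vv : ℕ → ℕ → ℂ) (γ : ℕ → Multiset ℕ) : ℂ :=
  ∏ k ∈ Finset.range E, monoFin (mm k) (γ k) (vv k)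

/-- the function `q_{r,±}^{(k)}(x;t)` of [S], (3.1.1). -/
noncomputable def qGenSys (t : ℂ) (E : ℕ) (mm : ℕ → ℕ) (vv : ℕ → ℕ → ℂ)
    (sgn : Bool) (k r : ℕ) : ℂ :=
  if r = 0 then 1 else
    let k' := if sgn then (k + 1) % E else (k + E - 1) % E
    ∑ i ∈ Finset.range (mm k),
      vv k i ^ ((r : ℤ) + (mm k : ℤ) - 1 - (mm k' : ℤ)) *
        (∏ jj ∈ Finset.range (mm k'), (vv k i - t * vv k' jj)) /
        ∏ jj ∈ (Finset.range (mm k)).erase i, (vv k i - vv k jj)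

/-- the function `q_{γ,±}(x;t)` of [S], (3.1.2). -/
noncomputable def qAlphaSys (t : ℂ) (E : ℕ) (mm : ℕ → ℕ) (vv : ℕ → ℕ → ℂ)
    (sgn : Bool) (γ : ℕ → Multiset ℕ) : ℂ :=
  ∏ k ∈ Finset.range E, ((γ k).map fun r => qGenSys t E mm vv sgn k r).prod

/-- `z_β = ∏ i^{n_i} n_i!` for a partition `β = (1^{n_1} 2^{n_2} ⋯)`. -/
noncomputable def zPart (μ : Multiset ℕ) : ℂ :=
  ∏ i ∈ μ.toFinset, (i : ℂ) ^ (μ.count i) * (Nat.factorial (μ.count i) : ℂ)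

/-- `z_γ(t) = z_γ ∏_{k,j} (1 - u^k t^{γ_j^{(k)}})⁻¹` for an `E`-tuple of
partitions `γ` (`u` the `E`-th root of unity), cf. (3.1.3). -/
noncomputable def zClassSys (u t : ℂ) (E : ℕ) (γ : ℕ → Multiset ℕ) : ℂ :=
  ((E : ℂ) ^ (∑ k ∈ Finset.range E, (γ k).card)) * (∏ k ∈ Finset.range E, zPart (γ k)) *
    (∏ k ∈ Finset.range E, ((γ k).map fun r => (1 - u ^ k * t ^ r)).prod)⁻¹

/-! ### the `j`-th pieces attached to an e-partition -/

/-- the truncation `α{j} = (α^{(0)},…,α^{(j₁d-1)})` (used when `c_{α,p} ∣ j`). -/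
noncomputable def braceF (e : ℕ) [NeZero e] (p d : ℕ) (j : ℕ) (α : ZMod e → Multiset ℕ) :
    ℕ → Multiset ℕ :=
  fun k => if k < Esys p d j then α ((k : ℕ) : ZMod e) else 0

/-- the `j₁d`-partition `α[j]` of `n/h` (condition (2.6.1)): component `k/h`
has parts `α_i^{(k)}/h`. -/
noncomputable def bracketF (e : ℕ) [NeZero e] (p d : ℕ) (j : ℕ) (α : ZMod e → Multiset ℕ) :
    ℕ → Multiset ℕ :=
  fun k' => if k' < Esys p d j then (α (((hOrd p j * k' : ℕ) : ZMod e))).map (fun r => r / hOrd p j)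
  else 0

/-- condition (2.6.1): `h_j` divides all parts `α_i^{(k)}`, and `h_j ∣ k`
whenever `α^{(k)} ≠ ∅`. -/
def Cond261 (e : ℕ) [NeZero e] (p j : ℕ) (α : ZMod e → Multiset ℕ) : Prop :=
  (∀ k, ∀ r ∈ α k, hOrd p j ∣ r) ∧ ∀ k : ZMod e, α k ≠ 0 → hOrd p j ∣ k.val

/-- `s_{α{j}}(𝒳_j)`. -/
noncomputable def schurBrace (e : ℕ) [NeZero e] (p d : ℕ) (m : ZMod e → ℕ) (xv : BIdx e m → ℂ)
    (j : ℕ) (α : ZMod e → Multiset ℕ) : ℂ :=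
  sAlphaSys (Esys p d j) (mmX e m) (vvX e p d m xv j) (braceF e p d j α)

/-- `p_{α[j]}(𝒳_j)` (2.6; the root of unity for the system `𝒳_j` is `ζ^h`). -/
noncomputable def pBracket (e : ℕ) [NeZero e] (p d : ℕ) (ζ : ℂ) (m : ZMod e → ℕ)
    (xv : BIdx e m → ℂ) (j : ℕ) (α : ZMod e → Multiset ℕ) : ℂ :=
  pAlphaSys (ζ ^ hOrd p j) (Esys p d j) (mmX e m) (vvX e p d m xv j) (bracketF e p d j α)

/-- `l(α[j])`. -/
noncomputable def lenBracket (e : ℕ) [NeZero e] (p d : ℕ) (j : ℕ)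
    (α : ZMod e → Multiset ℕ) : ℕ :=
  ∑ k ∈ Finset.range (Esys p d j), (bracketF e p d j α k).card

/-! ### Schur functions and power sums for `σ^q W` (2.10) -/

/-- the `j`-th component `s^j_{α,φ}` of the Schur function `𝐬_{α,φ}` for
`σ^q W` (2.10.1); the character `φ = φ_r` of `Γ_α = ⟨τ^c⟩ ≅ ℤ/(p/c)ℤ` is
encoded by `r`, via `φ_r(τ^j) = ζ^{drj}` for `c ∣ j`. -/
noncomputable def sTuple (e : ℕ) [NeZero e] (p d q : ℕ) (ζ : ℂ) (m : ZMod e → ℕ)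
    (xv : BIdx e m → ℂ) (α : ZMod e → Multiset ℕ) (r : ℕ) (j : ℕ) : ℂ :=
  if csize e d α ∣ j then
    ζ ^ (d * r * j) *
      ∑ i ∈ Finset.range (csize e d α),
        ζ ^ (q * i * d) * schurBrace e p d m xv j ((theta e d)^[i] α)
  else 0

/-- the `j`-th component `p^j_{β,b}` of the power sum `𝐩_{β,b}` for `σ^q W`
(2.10.2). -/
noncomputable def pTuple (e : ℕ) [NeZero e] (p d : ℕ) (ζ : ℂ) (m : ZMod e → ℕ)
    (xv : BIdx e m → ℂ) (β : ZMod e → Multiset ℕ) (b : ZMod e) (j : ℕ) : ℂ :=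
  if Cond261 e p j β then
    (hOrd p j : ℂ) ^ (lenBracket e p d j β) *
      zmpow e ζ (-(((Delta e β : ZMod e) + b) * ((j * d : ℕ) : ZMod e))) *
      pBracket e p d ζ m xv j β
  else 0

/-! ## The model for (extensions of) the irreducible characters of `W` -/

/-- trace of `f` on a subspace (junk `0` if not invariant). -/
noncomputable def traceOn {V : Type*} [AddCommGroup V] [Module ℂ V]
    (S : Submodule ℂ V) (f : V →ₗ[ℂ] V) : ℂ :=
  if h : ∀ v ∈ S, f v ∈ S then LinearMap.trace ℂ S (f.restrict h) else 0

/-- the scalar by which the torus element `diag dv ∈ G` acts on a highest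
weight vector of weight `α`. -/
noncomputable def weightOf (e : ℕ) [NeZero e] (m : ZMod e → ℕ) (α : ZMod e → Multiset ℕ)
    (dv : BIdx e m → ℂ) : ℂ :=
  ∏ b : BIdx e m, dv b ^ (lamOf (α b.1) b.2.val)

/-- the space of highest weight vectors of weight `α` in `V^{⊗n}`: the model
for the irreducible `W̃`-module `Z_α` (1.3.1, 1.4). -/
noncomputable def hwSubmodule (e n : ℕ) [NeZero e] (m : ZMod e → ℕ)
    (α : ZMod e → Multiset ℕ) : Submodule ℂ (TIdx e n m → ℂ) :=
  (⨅ g ∈ {g | IsUpperUni e m g},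
      Module.End.eigenspace (Matrix.mulVecLin (tensorPow e n m g)) 1) ⊓
    ⨅ dv : BIdx e m → ℂ,
      Module.End.eigenspace (Matrix.mulVecLin (tensorPow e n m (Matrix.diagonal dv)))
        (weightOf e m α dv)

/-- the model for the irreducible `W`-module `Z_{α,φ_r}`: the
`φ_r(τ^c)`-eigenspace of `τ^c` on `Z_α`, where `c = c_{α,p}` and
`φ_r(τ^c) = ζ^{cdr}`. -/
noncomputable def ZSub (e n : ℕ) [NeZero e] (d : ℕ) (m : ZMod e → ℕ)
    (hm : ∀ k, m (k + (d : ZMod e)) = m k) (ζ : ℂ) (α : ZMod e → Multiset ℕ) (r : ℕ) :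
    Submodule ℂ (TIdx e n m → ℂ) :=
  hwSubmodule e n m α ⊓
    Module.End.eigenspace (Matrix.mulVecLin ((tauMat e n d m hm) ^ (csize e d α)))
      (ζ ^ (csize e d α * d * r))

/-- The model for the irreducible character `χ^{α,φ_r}` of `W` and for its
chosen extension `χ̃^{α,φ_r}` to `⟨σ^q⟩ ⋉ W`: the trace of `w` on the model
`Z_{α,φ_r} ⊆ V^{⊗n}`. -/
noncomputable def charExt (e n : ℕ) [NeZero e] (d : ℕ) (m : ZMod e → ℕ)
    (hm : ∀ k, m (k + (d : ZMod e)) = m k) (ζ : ℂ) (α : ZMod e → Multiset ℕ) (r : ℕ)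
    (w : Wt e n) : ℂ :=
  traceOn (ZSub e n d m hm ζ α r) (Matrix.mulVecLin (rhoMat e n ζ m w))

/-! ## symbols, a-function, similarity; the reflection representation -/

/-- the multiset of entries of the symbol `Λ(α) = α + Λ⁰` of type `(r,0)`. -/
noncomputable def entriesSym (e : ℕ) [NeZero e] (m : ZMod e → ℕ) (rsym : ℕ)
    (α : ZMod e → Multiset ℕ) : Multiset ℕ :=
  (Finset.univ : Finset (BIdx e m)).val.map fun b =>
    lamOf (α b.1) b.2.val + rsym * (m b.1 - 1 - b.2.val)

noncomputable def pairMinSum (M : Multiset ℕ) : ℕ :=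
  (M.bind fun a => M.map fun b => min a b).sum

/-- the `a`-function (3.5.2) on symbols of type `(rsym, 0)`. -/
noncomputable def aVal (e : ℕ) [NeZero e] (m : ZMod e → ℕ) (rsym : ℕ)
    (α : ZMod e → Multiset ℕ) : ℕ :=
  pairMinSum (entriesSym e m rsym α) - pairMinSum (entriesSym e m rsym (fun _ => 0))

/-- similarity of symbols: equality of entries with multiplicities. -/
def SimSym (e : ℕ) [NeZero e] (m : ZMod e → ℕ) (rsym : ℕ) (α β : ZMod e → Multiset ℕ) : Prop :=
  entriesSym e m rsym α = entriesSym e m rsym β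

/-- the reflection representation `M = ℂ^n` of `W̃` (`w(e_i) = ζ^{a_i} e_{x(i)}`). -/
noncomputable def refMat (e n : ℕ) [NeZero e] (ζ : ℂ) (w : Wt e n) :
    Matrix (Fin n) (Fin n) ℂ :=
  fun i' i => if i' = w.right i then zmpow e ζ (w.left i').toAdd else 0

/-- The functional `R_q(f)` of (4.2.1), for a function `f` on the coset `σ^q W`. -/
noncomputable def Rq (e p d n : ℕ) [NeZero e] [NeZero n] (hp : p ∣ e) (ζ t : ℂ) (q : ℕ)
    (f : Wt e n → ℂ) : ℂ :=
  (ζ ^ (q * d) * t ^ (d * n) - 1) * (∏ i ∈ Finset.Icc 1 (n - 1), (t ^ (e * i) - 1)) *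
    (Nat.card (Wgrp e p n hp) : ℂ)⁻¹ *
    ∑ w ∈ Finset.univ.filter (fun w => inCoset e p n hp q w),
      (refMat e n ζ w).det * f w / (t • (1 : Matrix (Fin n) (Fin n) ℂ) - refMat e n ζ w).det

/-- `N^*`: the number of reflections in `W`. -/
noncomputable def Nstar (e p n : ℕ) [NeZero e] (hp : p ∣ e) (ζ : ℂ) : ℕ :=
  Nat.card {w : Wt e n // w ∈ Wgrp e p n hp ∧ w ≠ 1 ∧ (refMat e n ζ w - 1).rank = 1}

end GreenII
namespace GreenII

/-!
Translation by `d` of the colour index makes `τ` a permutation matrix on `V^{⊗n}` which carries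
the highest weight space of weight `α` onto that of weight `θ(α)`, and `Z_{α,φ}` onto
`Z_{θ(α),φ}`. If `w` lies in `σ^q W` then `w τ = ζ^{qd} τ w`: each diagonal entry `a_s` of `w`
contributes `ζ^{a_s d}` when the colour of the `s`-th tensor factor moves by `d`, and
`∑ a_s ≡ q (mod p)` while `ζ^{pd} = 1`. When `p ∣ q c_{α,p}`, `w` therefore commutes with
`τ^{c_{α,p}}` and acts on `Z_{α,φ}`, and transporting its trace along `τ` produces the factor
`ζ^{qd}` once for each application of `θ`.
-/

section LinearAlgebra

variable {ι R M : Type*}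

theorem mul_permMatrix_inv [Fintype ι] [DecidableEq ι] [NonAssocSemiring R]
    (A : Matrix ι ι R) (σ : Equiv.Perm ι) :
    A * σ⁻¹.permMatrix R = σ⁻¹.permMatrix R * A.submatrix σ σ := by
  rw [PEquiv.mul_toMatrix_toPEquiv, PEquiv.toMatrix_toPEquiv_mul, Matrix.submatrix_submatrix]
  congr 1
  ext x
  simp

theorem mulVec_mem_eigenspace_of_commute [Fintype ι] [CommRing R] {A B : Matrix ι ι R}
    (h : Commute A B) {μ : R} {v : ι → R} (hv : v ∈ Module.End.eigenspace A.mulVecLin μ) :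
    B.mulVec v ∈ Module.End.eigenspace A.mulVecLin μ := by
  rw [Module.End.mem_eigenspace_iff, Matrix.mulVecLin_apply] at hv ⊢
  rw [Matrix.mulVec_mulVec, h.eq, ← Matrix.mulVec_mulVec, hv, Matrix.mulVec_smul]

theorem trace_restrict_map_of_comp_eq_smul [CommRing R] [AddCommGroup M] [Module R M]
    {S : Submodule R M} {f : Module.End R M} {L : M ≃ₗ[R] M} {c : R}
    (h : ∀ v, f (L v) = c • L (f v)) (hS : ∀ v ∈ S, f v ∈ S)
    (hLS : ∀ v ∈ S.map L.toLinearMap, f v ∈ S.map L.toLinearMap) :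
    LinearMap.trace R _ (f.restrict hLS) = c * LinearMap.trace R S (f.restrict hS) := by
  have hconj : f.restrict hLS = c • (L.submoduleMap S).conj (f.restrict hS) := by
    ext x
    obtain ⟨y, rfl⟩ := (L.submoduleMap S).surjective x
    simp [LinearEquiv.conj_apply, h]
  rw [hconj, map_smul, LinearMap.trace_conj', smul_eq_mul]

end LinearAlgebra

section Theta

variable (e : ℕ) [NeZero e] (d : ℕ) (α : ZMod e → Multiset ℕ)

theorem theta_iterate (i : ℕ) : (theta e d)^[i] α = fun k => α (k - (i * d : ℕ)) := by
  induction i with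
  | zero => simp
  | succ i ih =>
    rw [Function.iterate_succ_apply', ih]
    funext k
    simp only [theta]
    congr 1
    push_cast
    ring

theorem mem_periodicPts_theta : α ∈ Function.periodicPts (theta e d) :=
  ⟨e, NeZero.pos e, by simp [Function.IsPeriodicPt, Function.IsFixedPt, theta_iterate]⟩

theorem csize_theta : csize e d (theta e d α) = csize e d α :=
  Function.minimalPeriod_apply (mem_periodicPts_theta e d α)

theorem csize_theta_iterate (i : ℕ) : csize e d ((theta e d)^[i] α) = csize e d α :=
  Function.minimalPeriod_apply_iterate (mem_periodicPts_theta e d α) i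

end Theta

section Tau

variable {e : ℕ} [NeZero e] (n : ℕ) {d : ℕ} {m : ZMod e → ℕ}
  (hm : ∀ k, m (k + (d : ZMod e)) = m k)

/-- The permutation of the basis of `V` induced by `τ`; its underlying function is `tauB`. -/
def tauPerm : Equiv.Perm (BIdx e m) :=
  Equiv.sigmaCongr (Equiv.addRight (d : ZMod e)) fun k => finCongr (hm k).symm

/-- The permutation of the basis of `V^{⊗n}` induced by `τ`. -/
def tauTensorPerm : Equiv.Perm (TIdx e n m) :=
  Equiv.piCongrRight fun _ => tauPerm hm

/-- The action of `τ` on `V^{⊗n}`, viewed as the space of coordinate vectors `TIdx e n m → ℂ`. -/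
def tauLin : (TIdx e n m → ℂ) ≃ₗ[ℂ] (TIdx e n m → ℂ) :=
  LinearEquiv.funCongrLeft ℂ ℂ (tauTensorPerm n hm)⁻¹

theorem tauMat_eq_permMatrix :
    tauMat e n d m hm = (tauTensorPerm n hm)⁻¹.permMatrix ℂ := by
  ext b' b
  have hτ : (∀ s, b' s = tauPerm hm (b s)) ↔ (tauTensorPerm n hm)⁻¹ b' = b := by
    rw [Equiv.Perm.inv_eq_iff_eq, funext_iff]
    rfl
  change (∏ s, if b' s = tauPerm hm (b s) then (1 : ℂ) else 0) = _
  rw [Fintype.prod_ite_zero, Finset.prod_const_one]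
  simp only [Equiv.Perm.permMatrix, PEquiv.toMatrix_apply, hτ, Equiv.toPEquiv_apply,
    Option.mem_some_iff]

theorem tauMat_mulVec (v : TIdx e n m → ℂ) :
    (tauMat e n d m hm).mulVec v = tauLin n hm v := by
  rw [tauMat_eq_permMatrix, Matrix.permMatrix_mulVec]
  rfl

theorem mul_tauMat (A : Matrix (TIdx e n m) (TIdx e n m) ℂ) :
    A * tauMat e n d m hm =
      tauMat e n d m hm * A.submatrix (tauTensorPerm n hm) (tauTensorPerm n hm) := by
  rw [tauMat_eq_permMatrix, mul_permMatrix_inv]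

theorem mulVec_tauLin (A : Matrix (TIdx e n m) (TIdx e n m) ℂ) (v : TIdx e n m → ℂ) :
    A.mulVec (tauLin n hm v) =
      tauLin n hm ((A.submatrix (tauTensorPerm n hm) (tauTensorPerm n hm)).mulVec v) := by
  rw [← tauMat_mulVec, ← tauMat_mulVec, Matrix.mulVec_mulVec, Matrix.mulVec_mulVec, mul_tauMat]

theorem tensorPow_mulVec_tauLin (g : Matrix (BIdx e m) (BIdx e m) ℂ) (v : TIdx e n m → ℂ) :
    (tensorPow e n m g).mulVec (tauLin n hm v) =
      tauLin n hm ((tensorPow e n m (g.submatrix (tauPerm hm) (tauPerm hm))).mulVec v) :=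
  mulVec_tauLin n hm _ v

theorem tauMat_pow_mulVec_tauLin (c : ℕ) (v : TIdx e n m → ℂ) :
    (tauMat e n d m hm ^ c).mulVec (tauLin n hm v) =
      tauLin n hm ((tauMat e n d m hm ^ c).mulVec v) := by
  rw [← tauMat_mulVec, ← tauMat_mulVec, Matrix.mulVec_mulVec, Matrix.mulVec_mulVec,
    (Commute.pow_self _ c).eq]

end Tau

section HighestWeight

variable {e n : ℕ} [NeZero e] {d : ℕ} {m : ZMod e → ℕ}
  (hm : ∀ k, m (k + (d : ZMod e)) = m k)

theorem isUpperUni_submatrix_tauPerm {g : Matrix (BIdx e m) (BIdx e m) ℂ} :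
    IsUpperUni e m (g.submatrix (tauPerm hm) (tauPerm hm)) ↔ IsUpperUni e m g := by
  have hpos (b b' : BIdx e m) :
      ((tauPerm hm b).1 = (tauPerm hm b').1 ∧
        (tauPerm hm b).2.val < (tauPerm hm b').2.val) ↔ (b.1 = b'.1 ∧ b.2.val < b'.2.val) :=
    and_congr_left' (add_left_inj (d : ZMod e))
  exact and_congr ((tauPerm hm).forall_congr fun _ => Iff.rfl)
    ((tauPerm hm).forall_congr fun b => (tauPerm hm).forall_congr fun b' => by
      rw [hpos, (tauPerm hm).injective.ne_iff, Matrix.submatrix_apply])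

theorem weightOf_theta (α : ZMod e → Multiset ℕ) (dv : BIdx e m → ℂ) :
    weightOf e m (theta e d α) dv = weightOf e m α (dv ∘ tauPerm hm) := by
  rw [weightOf, weightOf, ← Equiv.prod_comp (tauPerm hm)]
  refine Finset.prod_congr rfl fun b _ => ?_
  change dv (tauPerm hm b) ^ lamOf (α (b.1 + d - d)) b.2.val = _
  rw [add_sub_cancel_right, Function.comp_apply]

theorem mem_hwSubmodule_iff {α : ZMod e → Multiset ℕ} {v : TIdx e n m → ℂ} :
    v ∈ hwSubmodule e n m α ↔
      (∀ g, IsUpperUni e m g → (tensorPow e n m g).mulVec v = v) ∧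
      ∀ dv : BIdx e m → ℂ,
        (tensorPow e n m (Matrix.diagonal dv)).mulVec v = weightOf e m α dv • v := by
  simp only [hwSubmodule, Submodule.mem_inf, Submodule.mem_iInf, Module.End.mem_eigenspace_iff,
    Matrix.mulVecLin_apply, one_smul, Set.mem_ofPred_eq]

theorem tauLin_mem_hwSubmodule_theta {α : ZMod e → Multiset ℕ} {v : TIdx e n m → ℂ} :
    tauLin n hm v ∈ hwSubmodule e n m (theta e d α) ↔ v ∈ hwSubmodule e n m α := by
  simp only [mem_hwSubmodule_iff, tensorPow_mulVec_tauLin, weightOf_theta hm, ← map_smul,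
    EmbeddingLike.apply_eq_iff_eq, Matrix.submatrix_diagonal_equiv]
  exact and_congr
    ((Matrix.reindex (tauPerm hm).symm (tauPerm hm).symm).forall_congr fun _ =>
      imp_congr_left (isUpperUni_submatrix_tauPerm hm).symm)
    (((tauPerm hm).symm.arrowCongr (Equiv.refl ℂ)).forall_congr fun _ => Iff.rfl)

theorem ZSub_theta (ζ : ℂ) (α : ZMod e → Multiset ℕ) (r : ℕ) :
    ZSub e n d m hm ζ (theta e d α) r =
      (ZSub e n d m hm ζ α r).map (tauLin n hm).toLinearMap := by
  ext u
  obtain ⟨v, rfl⟩ := (tauLin n hm).surjective u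
  rw [Submodule.mem_map_equiv, LinearEquiv.symm_apply_apply]
  simp only [ZSub, Submodule.mem_inf, tauLin_mem_hwSubmodule_theta, csize_theta,
    Module.End.mem_eigenspace_iff, Matrix.mulVecLin_apply, tauMat_pow_mulVec_tauLin, ← map_smul,
    EmbeddingLike.apply_eq_iff_eq]

end HighestWeight

section Action

variable {e n : ℕ} [NeZero e] {d : ℕ} {m : ZMod e → ℕ}
  (hm : ∀ k, m (k + (d : ZMod e)) = m k) (ζ : ℂ)

theorem rhoMat_mul_apply (w : Wt e n) (A : Matrix (TIdx e n m) (TIdx e n m) ℂ)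
    (b' b : TIdx e n m) :
    (rhoMat e n ζ m w * A) b' b =
      (∏ s, ζ ^ ((w.left s).toAdd.val * (b' s).1.val)) * A (b' ∘ w.right) b := by
  simp only [Matrix.mul_apply, rhoMat, Equiv.eq_comp_symm, ite_mul, zero_mul,
    Fintype.sum_ite_eq]

theorem mul_rhoMat_apply (w : Wt e n) (A : Matrix (TIdx e n m) (TIdx e n m) ℂ)
    (b' b : TIdx e n m) :
    (A * rhoMat e n ζ m w) b' b =
      A b' (b ∘ w.right.symm) *
        ∏ s, ζ ^ ((w.left s).toAdd.val * (b (w.right.symm s)).1.val) := by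
  simp only [Matrix.mul_apply, rhoMat, mul_ite, mul_zero, Fintype.sum_ite_eq',
    Function.comp_apply]

theorem IsUpperUni.isBlockDiag {g : Matrix (BIdx e m) (BIdx e m) ℂ} (hg : IsUpperUni e m g) :
    IsBlockDiag e m g := fun _ _ hb =>
  hg.2 _ _ (fun h => hb (congrArg Sigma.fst h)) fun h => hb h.1

theorem isBlockDiag_diagonal (dv : BIdx e m → ℂ) : IsBlockDiag e m (Matrix.diagonal dv) :=
  fun _ _ hb => Matrix.diagonal_apply_ne _ fun h => hb (congrArg Sigma.fst h)

theorem commute_tensorPow_rhoMat {g : Matrix (BIdx e m) (BIdx e m) ℂ} (hg : IsBlockDiag e m g)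
    (w : Wt e n) : Commute (tensorPow e n m g) (rhoMat e n ζ m w) := by
  ext b' b
  have hreindex : ∏ s, g (b' (w.right s)) (b s) = ∏ s, g (b' s) (b (w.right.symm s)) :=
    Fintype.prod_equiv w.right _ _ fun s => by rw [Equiv.symm_apply_apply]
  rw [mul_rhoMat_apply, rhoMat_mul_apply]
  simp only [tensorPow, Matrix.of_apply, Function.comp_apply]
  rw [hreindex, ← Finset.prod_mul_distrib, ← Finset.prod_mul_distrib]
  refine Finset.prod_congr rfl fun s _ => ?_
  by_cases hcol : (b' s).1 = (b (w.right.symm s)).1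
  · rw [hcol, mul_comm]
  · rw [hg _ _ hcol, zero_mul, mul_zero]

theorem rhoMat_mulVec_mem_hwSubmodule (w : Wt e n) {α : ZMod e → Multiset ℕ}
    {v : TIdx e n m → ℂ} (hv : v ∈ hwSubmodule e n m α) :
    (rhoMat e n ζ m w).mulVec v ∈ hwSubmodule e n m α := by
  simp only [hwSubmodule, Submodule.mem_inf, Submodule.mem_iInf] at hv ⊢
  exact ⟨fun g hg => mulVec_mem_eigenspace_of_commute
      (commute_tensorPow_rhoMat ζ (IsUpperUni.isBlockDiag hg) w) (hv.1 g hg),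
    fun dv => mulVec_mem_eigenspace_of_commute
      (commute_tensorPow_rhoMat ζ (isBlockDiag_diagonal dv) w) (hv.2 dv)⟩

variable {ζ}

theorem rhoMat_submatrix_tauTensorPerm (hζ : ζ ^ e = 1) (w : Wt e n) :
    (rhoMat e n ζ m w).submatrix (tauTensorPerm n hm) (tauTensorPerm n hm) =
      ζ ^ ((∑ s, (w.left s).toAdd.val) * d) • rhoMat e n ζ m w := by
  have hshift (a c : ZMod e) :
      ζ ^ (a.val * (c + d).val) = ζ ^ (a.val * d) * ζ ^ (a.val * c.val) := by
    rw [← pow_add]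
    refine pow_eq_pow_of_modEq ((ZMod.natCast_eq_natCast_iff _ _ e).1 ?_) hζ
    push_cast
    simp only [ZMod.natCast_zmod_val]
    ring
  ext b' b
  have hperm : tauTensorPerm n hm b' = tauTensorPerm n hm b ∘ w.right.symm ↔
      b' = b ∘ w.right.symm := (tauTensorPerm n hm).apply_eq_iff_eq (y := b ∘ w.right.symm)
  change (if _ then ∏ s, ζ ^ ((w.left s).toAdd.val * ((b' s).1 + d).val) else 0) =
    _ * (if _ then _ else _)
  simp only [hperm, hshift, mul_ite, mul_zero, Finset.prod_mul_distrib, Finset.sum_mul,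
    Finset.prod_pow_eq_pow_sum]

theorem sum_val_eq_of_inCoset {p q : ℕ} [NeZero n] {hp : p ∣ e} {w : Wt e n}
    (hw : inCoset e p n hp q w) : ((∑ s, (w.left s).toAdd.val : ℕ) : ZMod p) = q := by
  obtain ⟨u, hu, rfl⟩ := hw
  have hσ : wsumHom e p n hp (sigmaElt e n) = Multiplicative.ofAdd (1 : ZMod p) := by
    simp [wsumHom, sigmaElt, apply_ite, ZMod.cast_one hp]
  have hsum : wsumHom e p n hp (sigmaElt e n ^ q * u) = Multiplicative.ofAdd (q : ZMod p) := by
    rw [map_mul, map_pow, MonoidHom.mem_ker.1 hu, hσ, mul_one, ← ofAdd_nsmul, nsmul_one]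
  rw [← toAdd_ofAdd (q : ZMod p), ← hsum, wsumHom, MonoidHom.coe_mk, OneHom.coe_mk, toAdd_ofAdd]
  simp only [Nat.cast_sum, ZMod.natCast_val, ZMod.castHom_apply]

theorem rhoMat_semiconjBy_tauMat {p q : ℕ} [NeZero n] {hp : p ∣ e} (hd : d = e / p)
    (hζ : ζ ^ e = 1) {w : Wt e n} (hw : inCoset e p n hp q w) :
    SemiconjBy (rhoMat e n ζ m w) (tauMat e n d m hm) (ζ ^ (q * d) • tauMat e n d m hm) := by
  have hmod : (∑ s, (w.left s).toAdd.val) * d ≡ q * d [MOD e] := by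
    have h := ((ZMod.natCast_eq_natCast_iff _ _ _).1 (sum_val_eq_of_inCoset hw)).mul_right' d
    rwa [hd, Nat.mul_div_cancel' hp, ← hd] at h
  rw [SemiconjBy, mul_tauMat, rhoMat_submatrix_tauTensorPerm hm hζ, Matrix.mul_smul,
    Matrix.smul_mul, pow_eq_pow_of_modEq hmod hζ]

end Action

section Character

variable {e p n q d : ℕ} [NeZero e] [NeZero n] {hp : p ∣ e} {ζ : ℂ} {m : ZMod e → ℕ}
  (hm : ∀ k, m (k + (d : ZMod e)) = m k) {α : ZMod e → Multiset ℕ} (r : ℕ) {w : Wt e n}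

theorem rhoMat_mulVec_mem_ZSub (hd : d = e / p) (hζ : ζ ^ e = 1) (hstab : p ∣ q * csize e d α)
    (hw : inCoset e p n hp q w) {v : TIdx e n m → ℂ} (hv : v ∈ ZSub e n d m hm ζ α r) :
    (rhoMat e n ζ m w).mulVec v ∈ ZSub e n d m hm ζ α r := by
  have hscalar : (ζ ^ (q * d)) ^ csize e d α = 1 := by
    obtain ⟨k, hk⟩ := hstab
    have hexp : q * d * csize e d α = e * k := by
      rw [mul_right_comm, hk, mul_right_comm, hd, Nat.mul_div_cancel' hp]
    rw [← pow_mul, hexp, pow_mul, hζ, one_pow]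
  have hcomm : Commute (tauMat e n d m hm ^ csize e d α) (rhoMat e n ζ m w) := by
    have h := (rhoMat_semiconjBy_tauMat hm hd hζ hw).pow_right (csize e d α)
    rw [smul_pow, hscalar, one_smul] at h
    exact Commute.symm h
  exact ⟨rhoMat_mulVec_mem_hwSubmodule ζ w hv.1, mulVec_mem_eigenspace_of_commute hcomm hv.2⟩

theorem charExt_theta (hd : d = e / p) (hζ : ζ ^ e = 1) (hstab : p ∣ q * csize e d α)
    (hw : inCoset e p n hp q w) :
    charExt e n d m hm ζ (theta e d α) r w = ζ ^ (q * d) * charExt e n d m hm ζ α r w := by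
  have hα : ∀ v ∈ ZSub e n d m hm ζ α r,
      (rhoMat e n ζ m w).mulVecLin v ∈ ZSub e n d m hm ζ α r :=
    fun _ => rhoMat_mulVec_mem_ZSub hm r hd hζ hstab hw
  have hθα : ∀ v ∈ ZSub e n d m hm ζ (theta e d α) r,
      (rhoMat e n ζ m w).mulVecLin v ∈ ZSub e n d m hm ζ (theta e d α) r :=
    fun _ => rhoMat_mulVec_mem_ZSub hm r hd hζ (by rwa [csize_theta]) hw
  rw [ZSub_theta] at hθα
  rw [charExt, charExt, ZSub_theta, traceOn, traceOn, dif_pos hα, dif_pos hθα]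
  refine trace_restrict_map_of_comp_eq_smul (fun v => ?_) hα hθα
  rw [Matrix.mulVecLin_apply, Matrix.mulVecLin_apply, ← tauMat_mulVec, ← tauMat_mulVec,
    Matrix.mulVec_mulVec, (rhoMat_semiconjBy_tauMat hm hd hζ hw).eq, Matrix.smul_mul,
    Matrix.smul_mulVec, ← Matrix.mulVec_mulVec]

theorem statement4_general (hd : d = e / p) (hζ : ζ ^ e = 1) (hstab : p ∣ q * csize e d α)
    (i : ℕ) (hw : inCoset e p n hp q w) :
    charExt e n d m hm ζ ((theta e d)^[i] α) r w =
      ζ ^ (q * i * d) * charExt e n d m hm ζ α r w := by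
  induction i with
  | zero => simp
  | succ i ih =>
    have hstab_iterate : p ∣ q * csize e d ((theta e d)^[i] α) := by rwa [csize_theta_iterate]
    rw [Function.iterate_succ_apply', charExt_theta hm r hd hζ hstab_iterate hw, ih, ← mul_assoc,
      ← pow_add]
    congr 2
    ring

end Character

/-- formula (2.9.2).  Let `q ∣ e` with `e/q` and `e/p`
coprime, and suppose the irreducible character `χ^{α,φ}` of `W` is
`σ^q`-stable (i.e. `p ∣ q·c_{α,p}`), with the fixed (tensor-space model)
extensions `χ̃` to `⟨σ^q⟩⋉W`.  Then for every `w ∈ σ^q W` and `0 ≤ i < c_{α,p}`,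
`χ̃^{θ^i(α),φ}(w) = ζ^{qid} χ̃^{α,φ}(w)`. -/
theorem statement4 (e p d n q : ℕ) [NeZero e] [NeZero n] (hp : p ∣ e) (hd : d = e / p)
    (hq : q ∣ e) (hqp : Nat.Coprime (e / q) (e / p))
    (ζ : ℂ) (hζ : IsPrimitiveRoot ζ e)
    (m : ZMod e → ℕ) (hmn : ∀ k, n ≤ m k) (hm : ∀ k, m (k + (d : ZMod e)) = m k)
    (α : ZMod e → Multiset ℕ) (hα : IsEPartition e n α)
    (r : ℕ) (hr : r < p / csize e d α)
    (hstab : p ∣ q * csize e d α)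
    (i : ℕ) (hi : i < csize e d α)
    (w : Wt e n) (hw : inCoset e p n hp q w) :
    charExt e n d m hm ζ ((theta e d)^[i] α) r w =
      ζ ^ (q * i * d) * charExt e n d m hm ζ α r w :=
  statement4_general hm r hd hζ.pow_eq_one hstab i hw

end GreenII
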